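/- arXiv:math/0610171 — 2 statements merged into one kernel-verified Lean document; each statement's English description precedes it below -/
import Mathlib

section
/- Let A be a Banach algebra and n ∈ ℕ. If A is (n+2)-ideally amenable, then A is n-ideally amenable. -/
/- ## Core definitions: Banach bimodules over (non-unital) complex Banach algebras,
iterated dual modules, derivations, ideal amenability, and Arens extensions. -/

noncomputable section

open ContinuousLinearMap

universe u

/-- The topological dual of a complex normed space. -/
abbrev Dl (X : Type u) [SeminormedAddCommGroup X] [NormedSpace ℂ X] : Type u := X →L[ℂ] ℂ

/-- The canonical embedding of a normed space into its double dual. -/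
def inclDD (X : Type u) [SeminormedAddCommGroup X] [NormedSpace ℂ X] : X →L[ℂ] Dl (Dl X) :=
  ContinuousLinearMap.apply ℂ ℂ

@[simp] lemma inclDD_apply {X : Type u} [SeminormedAddCommGroup X] [NormedSpace ℂ X]
    (x : X) (f : Dl X) : inclDD X x f = f x := rfl

/-- A (bounded) Banach bimodule structure of a complex Banach algebra `A`
on a complex Banach space `X`:  `l a x = a • x` and `r a x = x • a`. -/
structure Bimodule (A : Type u) [NonUnitalNormedRing A] [NormedSpace ℂ A]
    [SMulCommClass ℂ A A] [IsScalarTower ℂ A A]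
    (X : Type u) [NormedAddCommGroup X] [NormedSpace ℂ X] : Type u where
  l : A →L[ℂ] X →L[ℂ] X
  r : A →L[ℂ] X →L[ℂ] X
  l_mul : ∀ a b x, l (a * b) x = l a (l b x)
  r_mul : ∀ a b x, r (a * b) x = r b (r a x)
  lr : ∀ a b x, l a (r b x) = r b (l a x)

variable {A : Type u} [NonUnitalNormedRing A] [NormedSpace ℂ A]
  [SMulCommClass ℂ A A] [IsScalarTower ℂ A A]

/-- The dual module of a Banach bimodule: `(a·f)(x) = f(x·a)` and `(f·a)(x) = f(a·x)`. -/
def Bimodule.dualMod {X : Type u} [NormedAddCommGroup X] [NormedSpace ℂ X]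
    (M : Bimodule A X) : Bimodule A (Dl X) where
  l := ((ContinuousLinearMap.compL ℂ X X ℂ).flip).comp M.r
  r := ((ContinuousLinearMap.compL ℂ X X ℂ).flip).comp M.l
  l_mul := fun a b f => by
    ext x
    simp [M.r_mul]
  r_mul := fun a b f => by
    ext x
    simp [M.l_mul]
  lr := fun a b f => by
    ext x
    simp [M.lr]

@[simp] lemma Bimodule.dualMod_l_apply {X : Type u} [NormedAddCommGroup X] [NormedSpace ℂ X]
    (M : Bimodule A X) (a : A) (f : Dl X) (x : X) :
    M.dualMod.l a f x = f (M.r a x) := by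
  simp [Bimodule.dualMod]

@[simp] lemma Bimodule.dualMod_r_apply {X : Type u} [NormedAddCommGroup X] [NormedSpace ℂ X]
    (M : Bimodule A X) (a : A) (f : Dl X) (x : X) :
    M.dualMod.r a f x = f (M.l a x) := by
  simp [Bimodule.dualMod]

/-- A Banach `A`-bimodule, bundled with its underlying space. -/
structure BMod (A : Type u) [NonUnitalNormedRing A] [NormedSpace ℂ A]
    [SMulCommClass ℂ A A] [IsScalarTower ℂ A A] : Type (u + 1) where
  X : Type u
  [xGroup : NormedAddCommGroup X]
  [xSpace : NormedSpace ℂ X]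
  act : Bimodule A X

attribute [instance] BMod.xGroup BMod.xSpace

/-- The dual of a bundled Banach bimodule. -/
def BMod.dualObj (M : BMod A) : BMod A :=
  ⟨Dl M.X, M.act.dualMod⟩

/-- The `n`-th dual of a bundled Banach bimodule (`iter 0 = M`). -/
def BMod.iter (M : BMod A) : ℕ → BMod A
  | 0 => M
  | n + 1 => (M.iter n).dualObj

/-- A bounded derivation from `A` into the Banach `A`-bimodule `M`. -/
def IsDerivation (M : BMod A) (D : A →L[ℂ] M.X) : Prop :=
  ∀ a b : A, D (a * b) = M.act.l a (D b) + M.act.r b (D a)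

/-- An inner derivation.  -/
def IsInner (M : BMod A) (D : A →L[ℂ] M.X) : Prop :=
  ∃ x : M.X, ∀ a : A, D a = M.act.l a x - M.act.r a x

/-- `H¹(A, M) = {0}` : every bounded derivation into `M` is inner. -/
def H1Zero (M : BMod A) : Prop :=
  ∀ D : A →L[ℂ] M.X, IsDerivation M D → IsInner M D

/-- A closed two-sided ideal of the Banach algebra `A`. -/
structure ClosedIdeal (A : Type u) [NonUnitalNormedRing A] [NormedSpace ℂ A]
    [SMulCommClass ℂ A A] [IsScalarTower ℂ A A] : Type u where
  car : Submodule ℂ A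
  isClosed : IsClosed (car : Set A)
  mul_mem_left : ∀ (a x : A), x ∈ car → a * x ∈ car
  mul_mem_right : ∀ (a x : A), x ∈ car → x * a ∈ car

namespace ClosedIdeal

variable (I : ClosedIdeal A)

/-- Left multiplication action of `A` on a closed two-sided ideal. -/
def lAct : A →L[ℂ] ↥I.car →L[ℂ] ↥I.car :=
  LinearMap.mkContinuous₂
    (LinearMap.mk₂ ℂ
      (fun a x => (⟨a * (x : A), I.mul_mem_left a x x.2⟩ : ↥I.car))
      (fun a b x => Subtype.ext <| by simp [add_mul])
      (fun c a x => Subtype.ext <| by simp [smul_mul_assoc])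
      (fun a x y => Subtype.ext <| by simp [mul_add])
      (fun c a x => Subtype.ext <| by simp [mul_smul_comm]))
    1
    (fun a x => by
      simp only [LinearMap.mk₂_apply, one_mul]
      calc ‖(⟨a * (x : A), I.mul_mem_left a x x.2⟩ : ↥I.car)‖ = ‖a * (x : A)‖ := rfl
        _ ≤ ‖a‖ * ‖(x : A)‖ := norm_mul_le _ _
        _ = ‖a‖ * ‖x‖ := by rw [Submodule.coe_norm])

/-- Right multiplication action of `A` on a closed two-sided ideal. -/
def rAct : A →L[ℂ] ↥I.car →L[ℂ] ↥I.car :=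
  LinearMap.mkContinuous₂
    (LinearMap.mk₂ ℂ
      (fun a x => (⟨(x : A) * a, I.mul_mem_right a x x.2⟩ : ↥I.car))
      (fun a b x => Subtype.ext <| by simp [mul_add])
      (fun c a x => Subtype.ext <| by simp [mul_smul_comm])
      (fun a x y => Subtype.ext <| by simp [add_mul])
      (fun c a x => Subtype.ext <| by simp [smul_mul_assoc]))
    1
    (fun a x => by
      simp only [LinearMap.mk₂_apply, one_mul]
      calc ‖(⟨(x : A) * a, I.mul_mem_right a x x.2⟩ : ↥I.car)‖ = ‖(x : A) * a‖ := rfl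
        _ ≤ ‖(x : A)‖ * ‖a‖ := norm_mul_le _ _
        _ = ‖x‖ * ‖a‖ := by rw [Submodule.coe_norm]
        _ = ‖a‖ * ‖x‖ := mul_comm _ _)

@[simp] lemma lAct_apply (a : A) (x : ↥I.car) : (I.lAct a x : A) = a * (x : A) := rfl
@[simp] lemma rAct_apply (a : A) (x : ↥I.car) : (I.rAct a x : A) = (x : A) * a := rfl

/-- A closed two-sided ideal as a Banach `A`-bimodule. -/
def toBMod : BMod A where
  X := ↥I.car
  act :=
    { l := I.lAct
      r := I.rAct
      l_mul := fun a b x => Subtype.ext <| by simp [mul_assoc]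
      r_mul := fun a b x => Subtype.ext <| by simp [mul_assoc]
      lr := fun a b x => Subtype.ext <| by simp [mul_assoc] }

end ClosedIdeal

/-- The Banach algebra `A` as a Banach bimodule over itself. -/
def regBMod (A : Type u) [NonUnitalNormedRing A] [NormedSpace ℂ A]
    [SMulCommClass ℂ A A] [IsScalarTower ℂ A A] : BMod A where
  X := A
  act :=
    { l := ContinuousLinearMap.mul ℂ A
      r := (ContinuousLinearMap.mul ℂ A).flip
      l_mul := fun a b x => by simp [mul_assoc]
      r_mul := fun a b x => by simp [mul_assoc]
      lr := fun a b x => by simp [mul_assoc] }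

/-- `A` is `n`-`I`-weakly amenable: `H¹(A, I⁽ⁿ⁾) = {0}`. -/
def NIWeaklyAmenable (I : ClosedIdeal A) (n : ℕ) : Prop :=
  H1Zero (I.toBMod.iter n)

/-- `A` is `n`-ideally amenable. -/
def NIdeallyAmenable (A : Type u) [NonUnitalNormedRing A] [NormedSpace ℂ A]
    [SMulCommClass ℂ A A] [IsScalarTower ℂ A A] (n : ℕ) : Prop :=
  ∀ I : ClosedIdeal A, H1Zero (I.toBMod.iter n)

/-- `A` is `n`-weakly amenable: `H¹(A, A⁽ⁿ⁾) = {0}`. -/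
def NWeaklyAmenable (A : Type u) [NonUnitalNormedRing A] [NormedSpace ℂ A]
    [SMulCommClass ℂ A A] [IsScalarTower ℂ A A] (n : ℕ) : Prop :=
  H1Zero ((regBMod A).iter n)

/- ## Arens-type extensions of bounded bilinear maps to biduals -/

section Arens

variable {E F G : Type*}
  [SeminormedAddCommGroup E] [NormedSpace ℂ E]
  [SeminormedAddCommGroup F] [NormedSpace ℂ F]
  [SeminormedAddCommGroup G] [NormedSpace ℂ G]

/-- Auxiliary map for the Arens extension:
`arT b Ψ g = (e ↦ Ψ (g ∘ b e))`. -/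
def arT (b : E →L[ℂ] F →L[ℂ] G) (Ψ : Dl (Dl F)) (g : Dl G) : Dl E :=
  LinearMap.mkContinuous
    { toFun := fun e => Ψ (g.comp (b e))
      map_add' := fun e e' => by simp only [map_add, ContinuousLinearMap.comp_add, map_add]
      map_smul' := fun c e => by
        simp only [map_smul, ContinuousLinearMap.comp_smul, map_smul, RingHom.id_apply] }
    (‖Ψ‖ * ‖g‖ * ‖b‖)
    (fun e => by
      calc ‖Ψ (g.comp (b e))‖ ≤ ‖Ψ‖ * ‖g.comp (b e)‖ := Ψ.le_opNorm _
        _ ≤ ‖Ψ‖ * (‖g‖ * ‖b e‖) := by gcongr; exact g.opNorm_comp_le _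
        _ ≤ ‖Ψ‖ * (‖g‖ * (‖b‖ * ‖e‖)) := by gcongr; exact b.le_opNorm e
        _ = ‖Ψ‖ * ‖g‖ * ‖b‖ * ‖e‖ := by ring)

@[simp] lemma arT_apply (b : E →L[ℂ] F →L[ℂ] G) (Ψ : Dl (Dl F)) (g : Dl G)
    (e : E) : arT b Ψ g e = Ψ (g.comp (b e)) := rfl

lemma arT_add_right (b : E →L[ℂ] F →L[ℂ] G) (Ψ Ψ' : Dl (Dl F)) (g : Dl G) :
    arT b (Ψ + Ψ') g = arT b Ψ g + arT b Ψ' g := by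
  ext e; simp

lemma arT_smul_right (b : E →L[ℂ] F →L[ℂ] G) (c : ℂ) (Ψ : Dl (Dl F)) (g : Dl G) :
    arT b (c • Ψ) g = c • arT b Ψ g := by
  ext e; simp

lemma arT_add_g (b : E →L[ℂ] F →L[ℂ] G) (Ψ : Dl (Dl F)) (g g' : Dl G) :
    arT b Ψ (g + g') = arT b Ψ g + arT b Ψ g' := by
  ext e; simp [ContinuousLinearMap.add_comp]

lemma arT_smul_g (b : E →L[ℂ] F →L[ℂ] G) (c : ℂ) (Ψ : Dl (Dl F)) (g : Dl G) :
    arT b Ψ (c • g) = c • arT b Ψ g := by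
  ext e; simp [ContinuousLinearMap.smul_comp]

/-- One half of the Arens extension: `(arExtFun b Φ Ψ) g = Φ (e ↦ Ψ (g ∘ b e))`. -/
def arExtFun (b : E →L[ℂ] F →L[ℂ] G) (Φ : Dl (Dl E)) (Ψ : Dl (Dl F)) :
    Dl (Dl G) :=
  LinearMap.mkContinuous
    { toFun := fun g => Φ (arT b Ψ g)
      map_add' := fun g g' => by simp only [arT_add_g, map_add]
      map_smul' := fun c g => by simp only [arT_smul_g, map_smul, RingHom.id_apply] }
    (‖Φ‖ * ‖Ψ‖ * ‖b‖)
    (fun g => by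
      calc ‖Φ (arT b Ψ g)‖ ≤ ‖Φ‖ * ‖arT b Ψ g‖ := Φ.le_opNorm _
        _ ≤ ‖Φ‖ * (‖Ψ‖ * ‖g‖ * ‖b‖) := by
            gcongr
            exact LinearMap.mkContinuous_norm_le _ (by positivity) _
        _ = ‖Φ‖ * ‖Ψ‖ * ‖b‖ * ‖g‖ := by ring)

@[simp] lemma arExtFun_apply (b : E →L[ℂ] F →L[ℂ] G) (Φ : Dl (Dl E))
    (Ψ : Dl (Dl F)) (g : Dl G) : arExtFun b Φ Ψ g = Φ (arT b Ψ g) := rfl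

lemma arExtFun_norm_le (b : E →L[ℂ] F →L[ℂ] G) (Φ : Dl (Dl E))
    (Ψ : Dl (Dl F)) : ‖arExtFun b Φ Ψ‖ ≤ ‖Φ‖ * ‖Ψ‖ * ‖b‖ :=
  LinearMap.mkContinuous_norm_le _ (by positivity) _

/-- The (first-)Arens-type extension of a bounded bilinear map `b : E × F → G` to the
biduals, obtained by iterated weak* limits (outer limit in the first variable):
`(arExt b Φ Ψ) g = Φ (e ↦ Ψ (g ∘ b e))`. -/
def arExt (b : E →L[ℂ] F →L[ℂ] G) :
    Dl (Dl E) →L[ℂ] Dl (Dl F) →L[ℂ] Dl (Dl G) :=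
  LinearMap.mkContinuous₂
    (LinearMap.mk₂ ℂ (arExtFun b)
      (fun Φ Φ' Ψ => by ext g; simp)
      (fun c Φ Ψ => by ext g; simp)
      (fun Φ Ψ Ψ' => by ext g; simp [arT_add_right])
      (fun c Φ Ψ => by ext g; simp [arT_smul_right]))
    ‖b‖
    (fun Φ Ψ => by
      simp only [LinearMap.mk₂_apply]
      exact (arExtFun_norm_le b Φ Ψ).trans (le_of_eq (by ring)))

@[simp] lemma arExt_apply (b : E →L[ℂ] F →L[ℂ] G) (Φ : Dl (Dl E))
    (Ψ : Dl (Dl F)) (g : Dl G) : arExt b Φ Ψ g = Φ (arT b Ψ g) := rfl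

end Arens

/- ## Arens products and Arens module extensions -/

/-- The first Arens product on the bidual of a Banach algebra. -/
def arensMul (A : Type u) [NonUnitalNormedRing A] [NormedSpace ℂ A]
    [SMulCommClass ℂ A A] [IsScalarTower ℂ A A] :
    Dl (Dl A) →L[ℂ] Dl (Dl A) →L[ℂ] Dl (Dl A) :=
  arExt (ContinuousLinearMap.mul ℂ A)

/-- The second Arens product on the bidual of a Banach algebra. -/
def arensMul₂ (A : Type u) [NonUnitalNormedRing A] [NormedSpace ℂ A]
    [SMulCommClass ℂ A A] [IsScalarTower ℂ A A]
    (F G : Dl (Dl A)) : Dl (Dl A) :=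
  arExt (ContinuousLinearMap.mul ℂ A).flip G F

namespace Bimodule

variable {X : Type u} [NormedAddCommGroup X] [NormedSpace ℂ X]

/-- First (iterated weak*-limit) extension of the left action:
`a'' · x'' = w*-lim_i lim_j a_i • x_j`. -/
def lExt (M : Bimodule A X) (F : Dl (Dl A)) (ξ : Dl (Dl X)) :
    Dl (Dl X) :=
  arExt M.l F ξ

/-- Second extension of the left action: `a'' · x'' = w*-lim_j lim_i a_i • x_j`. -/
def lExt₂ (M : Bimodule A X) (F : Dl (Dl A)) (ξ : Dl (Dl X)) :
    Dl (Dl X) :=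
  arExt M.l.flip ξ F

/-- First (iterated weak*-limit) extension of the right action:
`x'' · a'' = w*-lim_j lim_i x_j • a_i`. -/
def rExt (M : Bimodule A X) (ξ : Dl (Dl X)) (F : Dl (Dl A)) :
    Dl (Dl X) :=
  arExt M.r.flip ξ F

/-- Second extension of the right action: `x'' · a'' = w*-lim_i lim_j x_j • a_i`. -/
def rExt₂ (M : Bimodule A X) (ξ : Dl (Dl X)) (F : Dl (Dl A)) :
    Dl (Dl X) :=
  arExt M.r F ξ

/-- The topological centre of the right module action of `A` on `X`, i.e. the set of
`x'' ∈ X**` such that `a'' ↦ x'' · a''` is weak*-weak* continuous. -/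
def rTopCenter (M : Bimodule A X) : Set (Dl (Dl X)) :=
  {ξ | Continuous fun F : WeakDual ℂ (Dl A) => (M.rExt ξ F : WeakDual ℂ (Dl X))}

end Bimodule

/-- The topological centre of the bidual of a Banach algebra (with the first
Arens product): the set of `F ∈ A**` for which `G ↦ F □ G` is weak*-weak* continuous. -/
def arensTopCenter (A : Type u) [NonUnitalNormedRing A] [NormedSpace ℂ A]
    [SMulCommClass ℂ A A] [IsScalarTower ℂ A A] : Set (Dl (Dl A)) :=
  {F | Continuous fun G : WeakDual ℂ (Dl A) => (arensMul A F G : WeakDual ℂ (Dl A))}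

/- ## Adjoint maps -/

section DMap

variable {E F : Type*} [SeminormedAddCommGroup E] [NormedSpace ℂ E]
  [SeminormedAddCommGroup F] [NormedSpace ℂ F]

/-- The adjoint (dual map) of a bounded operator. -/
def dMap (f : E →L[ℂ] F) : Dl F →L[ℂ] Dl E :=
  (ContinuousLinearMap.compL ℂ E F ℂ).flip f

@[simp] lemma dMap_apply (f : E →L[ℂ] F) (g : Dl F) : dMap f g = g.comp f := rfl

/-- The canonical projection `X⁽⁴⁾ → X⁽²⁾`, i.e. the adjoint of the canonical
embedding `X* → X***`. -/
def Pmap (X : Type u) [SeminormedAddCommGroup X] [NormedSpace ℂ X] :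
    Dl (Dl (Dl (Dl X))) →L[ℂ] Dl (Dl X) :=
  dMap (inclDD (Dl X))

end DMap

/-! For a Banach bimodule `X`, the dual `X*` is a bimodule retract of `X***`: the canonical
embedding `X* → X***` is split by the adjoint of the canonical embedding `X → X**`. A derivation
into `X*` is therefore inner as soon as it becomes inner in `X***`. Applied to `X = I⁽ⁿ⁻¹⁾`, this
passes from `I⁽ⁿ⁺²⁾` to `I⁽ⁿ⁾`. -/

namespace Bimodule

variable {X Y : Type u} [NormedAddCommGroup X] [NormedSpace ℂ X]
  [NormedAddCommGroup Y] [NormedSpace ℂ Y] {M : Bimodule A X} {N : Bimodule A Y}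

/-- A bounded linear map is a homomorphism of Banach `A`-bimodules if it commutes with both
actions of `A`. Such maps transport derivations, and inner ones to inner ones. This is a predicate
on continuous linear maps, so that `inclDD` and `dMap` can be used as they stand. -/
structure IsHom (M : Bimodule A X) (N : Bimodule A Y) (T : X →L[ℂ] Y) : Prop where
  map_l : ∀ a x, T (M.l a x) = N.l a (T x)
  map_r : ∀ a x, T (M.r a x) = N.r a (T x)

lemma isHom_inclDD (M : Bimodule A X) : IsHom M M.dualMod.dualMod (inclDD X) where
  map_l a x := by ext f; simp
  map_r a x := by ext f; simp

lemma IsHom.dMap {T : X →L[ℂ] Y} (hT : IsHom M N T) : IsHom N.dualMod M.dualMod (dMap T) where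
  map_l a f := by ext x; simp [hT.map_r]
  map_r a f := by ext x; simp [hT.map_l]

end Bimodule

lemma leftInverse_dMap_inclDD (X : Type u) [SeminormedAddCommGroup X] [NormedSpace ℂ X] :
    Function.LeftInverse (dMap (inclDD X)) (inclDD (Dl X)) :=
  fun _ => rfl

section Derivations

variable {M N : BMod A} {T : M.X →L[ℂ] N.X} {D : A →L[ℂ] M.X}

lemma IsDerivation.map (hD : IsDerivation M D) (hT : M.act.IsHom N.act T) :
    IsDerivation N (T.comp D) := fun a b => by
  simp only [comp_apply, hD a b, map_add, hT.map_l, hT.map_r]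

lemma IsInner.map (hD : IsInner M D) (hT : M.act.IsHom N.act T) : IsInner N (T.comp D) := by
  obtain ⟨x, hx⟩ := hD
  exact ⟨T x, fun a => by simp only [comp_apply, hx a, map_sub, hT.map_l, hT.map_r]⟩

lemma H1Zero.of_retract {S : N.X →L[ℂ] M.X} (hN : H1Zero N) (hT : M.act.IsHom N.act T)
    (hS : N.act.IsHom M.act S) (hST : Function.LeftInverse S T) : H1Zero M := by
  intro D hD
  have inner_STD : IsInner M (S.comp (T.comp D)) := (hN _ (hD.map hT)).map hS
  have STD_eq : S.comp (T.comp D) = D := ContinuousLinearMap.ext fun a => hST (D a)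
  rwa [STD_eq] at inner_STD

end Derivations

lemma H1Zero.dualObj_of_tripleDual {M : BMod A} (h : H1Zero M.dualObj.dualObj.dualObj) :
    H1Zero M.dualObj :=
  h.of_retract M.act.dualMod.isHom_inclDD M.act.isHom_inclDD.dMap (leftInverse_dMap_inclDD M.X)

theorem nIdeallyAmenable_of_add_two_general (M : BMod A) {n : ℕ} (hn : 1 ≤ n)
    (h : H1Zero (M.iter (n + 2))) : H1Zero (M.iter n) := by
  obtain ⟨m, rfl⟩ := Nat.exists_eq_add_of_le' hn
  exact H1Zero.dualObj_of_tripleDual (M := M.iter m) h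

/-- **Corollary 1.6.** If `A` is `(n+2)`-ideally amenable then `A` is
`n`-ideally amenable. -/
theorem nIdeallyAmenable_of_add_two
    {A : Type u} [NonUnitalNormedRing A] [NormedSpace ℂ A]
    [SMulCommClass ℂ A A] [IsScalarTower ℂ A A] [CompleteSpace A]
    (n : ℕ) (hn : 1 ≤ n)
    (h : NIdeallyAmenable A (n + 2)) :
    NIdeallyAmenable A n :=
  fun I => nIdeallyAmenable_of_add_two_general I.toBMod hn (h I)
end
end

section
/- Let A be a commutative Banach algebra and n ∈ ℕ. Then A is 2n-weakly amenable if and only if A is 2n-ideally amenable. -/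
/- ## Core definitions: Banach bimodules over (non-unital) complex Banach algebras,
iterated dual modules, derivations, ideal amenability, and Arens extensions. -/

noncomputable section

open ContinuousLinearMap

universe u

variable {A : Type u} [NonUnitalNormedRing A] [NormedSpace ℂ A]
  [SMulCommClass ℂ A A] [IsScalarTower ℂ A A]

/-!
The second adjoint of an embedding is again an embedding, by the Hahn–Banach theorem, so the
inclusion of a closed ideal `I` into `A` induces an injective module map `I⁽²ⁿ⁾ → A⁽²ⁿ⁾` (odd
duals would reverse the arrow). If `A` is commutative then `A⁽²ⁿ⁾` is symmetric, so its only inner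
derivation is `0`; hence a derivation into `I⁽²ⁿ⁾` vanishes as soon as its composite into `A⁽²ⁿ⁾`
is inner. The converse is the case `I = A`.
-/

section Extension

open scoped NNReal

theorem exists_comp_eq_norm_le_of_antilipschitzWith {𝕜 E F : Type*} [RCLike 𝕜]
    [NormedAddCommGroup E] [NormedSpace 𝕜 E] [SeminormedAddCommGroup F] [NormedSpace 𝕜 F]
    {φ : E →L[𝕜] F} {K : ℝ≥0} (hφ : AntilipschitzWith K φ) (f : E →L[𝕜] 𝕜) :
    ∃ g : F →L[𝕜] 𝕜, g.comp φ = f ∧ ‖g‖ ≤ K * ‖f‖ := by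
  let e : E ≃ₗ[𝕜] φ.range := LinearEquiv.ofInjective φ.toLinearMap hφ.injective
  have apply_symm (y : φ.range) : φ (e.symm y) = y := congrArg Subtype.val (e.apply_symm_apply y)
  have bound (y : φ.range) : ‖f (e.symm y)‖ ≤ K * ‖f‖ * ‖y‖ :=
    calc ‖f (e.symm y)‖ ≤ ‖f‖ * ‖e.symm y‖ := f.le_opNorm _
      _ ≤ ‖f‖ * (K * ‖φ (e.symm y)‖) := by
        gcongr
        exact φ.bound_of_antilipschitz hφ _
      _ = K * ‖f‖ * ‖y‖ := by
        rw [apply_symm, Submodule.coe_norm]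
        ring
  obtain ⟨g, hg, hg_norm⟩ := exists_extension_norm_eq φ.range
    ((f.toLinearMap ∘ₗ e.symm.toLinearMap).mkContinuous (K * ‖f‖) bound)
  refine ⟨g, ContinuousLinearMap.ext fun x => ?_,
    hg_norm.trans_le (LinearMap.mkContinuous_norm_le _ (by positivity) _)⟩
  calc g (φ x) = f (e.symm (e x)) := hg (e x)
    _ = f x := by rw [e.symm_apply_apply]

theorem antilipschitzWith_dMap_dMap {E F : Type*} [NormedAddCommGroup E] [NormedSpace ℂ E]
    [SeminormedAddCommGroup F] [NormedSpace ℂ F] {φ : E →L[ℂ] F} {K : ℝ≥0}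
    (hφ : AntilipschitzWith K φ) : AntilipschitzWith K (dMap (dMap φ)) := by
  refine ContinuousLinearMap.antilipschitz_of_bound _ fun Φ =>
    Φ.opNorm_le_bound (by positivity) fun f => ?_
  obtain ⟨g, rfl, hg⟩ := exists_comp_eq_norm_le_of_antilipschitzWith hφ f
  calc ‖Φ (g.comp φ)‖ = ‖dMap (dMap φ) Φ g‖ := rfl
    _ ≤ ‖dMap (dMap φ) Φ‖ * ‖g‖ := (dMap (dMap φ) Φ).le_opNorm g
    _ ≤ ‖dMap (dMap φ) Φ‖ * (K * ‖g.comp φ‖) := by gcongr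
    _ = K * ‖dMap (dMap φ) Φ‖ * ‖g.comp φ‖ := by ring

end Extension

namespace BMod

variable {M N : BMod A}

/-- Bounded homomorphisms of Banach `A`-bimodules. -/
structure Hom (M N : BMod A) where
  toCLM : M.X →L[ℂ] N.X
  map_l : ∀ a x, toCLM (M.act.l a x) = N.act.l a (toCLM x)
  map_r : ∀ a x, toCLM (M.act.r a x) = N.act.r a (toCLM x)

namespace Hom

/-- The adjoint of a bimodule homomorphism, as a homomorphism between the dual bimodules. -/
def dual (f : Hom M N) : Hom N.dualObj M.dualObj where
  toCLM := dMap f.toCLM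
  map_l a (g : Dl N.X) := ContinuousLinearMap.ext fun x => congrArg g (f.map_r a x).symm
  map_r a (g : Dl N.X) := ContinuousLinearMap.ext fun x => congrArg g (f.map_l a x).symm

/-- The `2n`-th adjoint of a bimodule homomorphism. -/
def iterEven (f : Hom M N) : ∀ n : ℕ, Hom (M.iter (2 * n)) (N.iter (2 * n))
  | 0 => f
  | n + 1 => (f.iterEven n).dual.dual

theorem antilipschitzWith_iterEven {f : Hom M N} {K : NNReal} (hf : AntilipschitzWith K f.toCLM) :
    ∀ n : ℕ, AntilipschitzWith K (f.iterEven n).toCLM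
  | 0 => hf
  | n + 1 => antilipschitzWith_dMap_dMap (antilipschitzWith_iterEven hf n)

theorem isDerivation_comp (f : Hom M N) {D : A →L[ℂ] M.X} (hD : IsDerivation M D) :
    IsDerivation N (f.toCLM.comp D) := fun a b => by
  simp [hD a b, f.map_l, f.map_r]

end Hom

/-- The bimodule `M` is a retract of `N`: the identity of `M` factors through `N` by bounded
bimodule homomorphisms. -/
def IsRetract (M N : BMod A) : Prop :=
  ∃ (i : Hom M N) (p : Hom N M), ∀ x, p.toCLM (i.toCLM x) = x

theorem IsRetract.dualObj : IsRetract M N → IsRetract M.dualObj N.dualObj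
  | ⟨i, p, hpi⟩ => ⟨p.dual, i.dual, fun f : Dl M.X =>
      ContinuousLinearMap.ext fun x => congrArg f (hpi x)⟩

theorem IsRetract.iter (h : IsRetract M N) : ∀ n : ℕ, IsRetract (M.iter n) (N.iter n)
  | 0 => h
  | n + 1 => (h.iter n).dualObj

theorem IsRetract.h1Zero (h : IsRetract M N) (hN : H1Zero N) : H1Zero M := by
  obtain ⟨i, p, hpi⟩ := h
  intro D hD
  obtain ⟨y, hy⟩ := hN _ (i.isDerivation_comp hD)
  refine ⟨p.toCLM y, fun a => ?_⟩
  calc D a = p.toCLM (i.toCLM (D a)) := (hpi _).symm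
    _ = p.toCLM (N.act.l a y - N.act.r a y) := congrArg p.toCLM (hy a)
    _ = M.act.l a (p.toCLM y) - M.act.r a (p.toCLM y) := by rw [map_sub, p.map_l, p.map_r]

/-- Symmetric bimodules: the left and right actions coincide. -/
def IsSymmetric (M : BMod A) : Prop :=
  ∀ a x, M.act.l a x = M.act.r a x

theorem IsSymmetric.dualObj (h : M.IsSymmetric) : M.dualObj.IsSymmetric :=
  fun a (f : Dl M.X) => ContinuousLinearMap.ext fun x => congrArg f (h a x).symm

theorem IsSymmetric.iter (h : M.IsSymmetric) : ∀ n : ℕ, (M.iter n).IsSymmetric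
  | 0 => h
  | n + 1 => (h.iter n).dualObj

theorem IsSymmetric.eq_zero_of_isInner (h : M.IsSymmetric) {D : A →L[ℂ] M.X} (hD : IsInner M D) :
    D = 0 := by
  obtain ⟨x, hx⟩ := hD
  ext a
  rw [hx a, h a x, sub_self, zero_apply]

theorem IsSymmetric.h1Zero_of_injective (hN : N.IsSymmetric) (h : H1Zero N) {f : Hom M N}
    (hf : Function.Injective f.toCLM) : H1Zero M := by
  intro D hD
  have comp_eq_zero : f.toCLM.comp D = 0 := hN.eq_zero_of_isInner (h _ (f.isDerivation_comp hD))
  have D_eq_zero (a : A) : D a = 0 :=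
    (map_eq_zero_iff f.toCLM hf).mp (DFunLike.congr_fun comp_eq_zero a)
  exact ⟨0, fun a => by simp [D_eq_zero a]⟩

end BMod

namespace ClosedIdeal

/-- The inclusion of a closed ideal into the algebra, as a bimodule homomorphism. -/
def inclusion (I : ClosedIdeal A) : BMod.Hom I.toBMod (regBMod A) where
  toCLM := I.car.subtypeL
  map_l _ _ := rfl
  map_r _ _ := rfl

variable (A) in
/-- The whole algebra as a closed ideal of itself. -/
def top : ClosedIdeal A where
  car := ⊤
  isClosed := isClosed_univ
  mul_mem_left _ _ _ := trivial
  mul_mem_right _ _ _ := trivial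

variable (A) in
theorem isRetract_regBMod_top : BMod.IsRetract (regBMod A) (top A).toBMod :=
  ⟨⟨(ContinuousLinearMap.id ℂ A).codRestrict ⊤ fun _ => trivial, fun _ _ => rfl, fun _ _ => rfl⟩,
    (top A).inclusion, fun _ => rfl⟩

end ClosedIdeal

theorem NIdeallyAmenable.nWeaklyAmenable {n : ℕ} (h : NIdeallyAmenable A n) :
    NWeaklyAmenable A n :=
  ((ClosedIdeal.isRetract_regBMod_top A).iter n).h1Zero (h _)

theorem NWeaklyAmenable.niWeaklyAmenable_of_comm (hcomm : ∀ a b : A, a * b = b * a) {n : ℕ}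
    (h : NWeaklyAmenable A (2 * n)) (I : ClosedIdeal A) : NIWeaklyAmenable I (2 * n) := by
  have symmetric : (regBMod A).IsSymmetric := hcomm
  have antilipschitz : AntilipschitzWith 1 (I.inclusion.iterEven n).toCLM :=
    BMod.Hom.antilipschitzWith_iterEven I.car.subtypeₗᵢ.antilipschitz n
  exact (symmetric.iter _).h1Zero_of_injective h antilipschitz.injective

theorem comm_even_weakly_iff_ideally_general
    {A : Type u} [NonUnitalNormedRing A] [NormedSpace ℂ A]
    [SMulCommClass ℂ A A] [IsScalarTower ℂ A A]
    (hcomm : ∀ a b : A, a * b = b * a) (n : ℕ) :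
    NWeaklyAmenable A (2 * n) ↔ NIdeallyAmenable A (2 * n) :=
  ⟨fun h => h.niWeaklyAmenable_of_comm hcomm, fun h => h.nWeaklyAmenable⟩

/-- **Theorem 3.2.** A commutative Banach algebra is `2n`-weakly amenable if and
only if it is `2n`-ideally amenable. -/
theorem comm_even_weakly_iff_ideally
    {A : Type u} [NonUnitalNormedRing A] [NormedSpace ℂ A]
    [SMulCommClass ℂ A A] [IsScalarTower ℂ A A] [CompleteSpace A]
    (hcomm : ∀ a b : A, a * b = b * a)
    (n : ℕ) (hn : 1 ≤ n) :
    NWeaklyAmenable A (2 * n) ↔ NIdeallyAmenable A (2 * n) :=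
  comm_even_weakly_iff_ideally_general hcomm n
end
end
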